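/- arXiv:1205.4960 — 2 statements merged into one kernel-verified Lean document; each statement's English description precedes it below -/
import Mathlib

section
/- A group is locally cyclic if and only if it is isomorphic to a section (a quotient of a subgroup) of the additive group of rational numbers ℚ. -/
theorem lc_rat_aux (x y : ℚ) : ∃ u v m n : ℤ, x = m * (u * x + v * y) ∧ y = n * (u * x + v * y) := by
  obtain ⟨P, Q, D, hD, rfl, rfl⟩ : ∃ P Q D : ℤ, (D : ℚ) ≠ 0 ∧ x = P / D ∧ y = Q / D := by
    have h1 : (x.den : ℚ) ≠ 0 := by exact_mod_cast x.den_nz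
    have h2 : (y.den : ℚ) ≠ 0 := by exact_mod_cast y.den_nz
    refine ⟨x.num * y.den, y.num * x.den, x.den * y.den, ?_, ?_, ?_⟩
    · push_cast; exact mul_ne_zero h1 h2
    · push_cast; rw [mul_div_mul_right _ _ h2]; exact (Rat.num_div_den x).symm
    · push_cast; rw [mul_comm (x.den : ℚ), mul_div_mul_right _ _ h1]; exact (Rat.num_div_den y).symm
  have hb := Int.gcd_eq_gcd_ab P Q
  obtain ⟨m, hm⟩ := Int.gcd_dvd_left P Q
  obtain ⟨n, hn⟩ := Int.gcd_dvd_right P Q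
  refine ⟨Int.gcdA P Q, Int.gcdB P Q, m, n, ?_, ?_⟩
  · have : (P : ℚ) = (P * Int.gcdA P Q + Q * Int.gcdB P Q) * m := by
      rw [hb] at hm; exact_mod_cast hm
    field_simp
    linarith
  · have : (Q : ℚ) = (P * Int.gcdA P Q + Q * Int.gcdB P Q) * n := by
      rw [hb] at hn; exact_mod_cast hn
    field_simp
    linarith

theorem lc_section (H : AddSubgroup ℚ) (N : AddSubgroup H) (a b : H ⧸ N) :
    ∃ c : H ⧸ N, (∃ m : ℤ, m • c = a) ∧ ∃ n : ℤ, n • c = b := by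
  obtain ⟨x, rfl⟩ := QuotientAddGroup.mk_surjective a
  obtain ⟨y, rfl⟩ := QuotientAddGroup.mk_surjective b
  obtain ⟨u, v, m, n, h1, h2⟩ := lc_rat_aux x y
  refine ⟨((u • x + v • y : H) : H ⧸ N), ⟨m, ?_⟩, n, ?_⟩
  · rw [← QuotientAddGroup.mk_zsmul]; congr 1; ext; simpa [mul_add] using h1.symm
  · rw [← QuotientAddGroup.mk_zsmul]; congr 1; ext; simpa [mul_add] using h2.symm

theorem lc_countable (G : Type*) [Group G]
    (h : ∀ a b : G, ∃ c : G, a ∈ Subgroup.zpowers c ∧ b ∈ Subgroup.zpowers c) :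
    Countable G := by
  by_cases ht : ∃ a : G, orderOf a = 0
  · obtain ⟨a, ha⟩ := ht
    have inj : ∀ d : G, a ∈ Subgroup.zpowers d → Function.Injective (fun n : ℤ => d ^ n) := by
      rintro d ⟨k, hk⟩
      rw [injective_zpow_iff_not_isOfFinOrder]
      intro hd
      rw [orderOf_eq_zero_iff] at ha
      apply ha
      rw [← hk]
      exact hd.zpow
    have key : ∀ b : G, ∃ p : ℤ × ℤ, p.2 ≠ 0 ∧ b ^ p.2 = a ^ p.1 := by
      intro b
      obtain ⟨c, ⟨n, hn⟩, ⟨m, hm⟩⟩ := h a b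
      refine ⟨(m, n), ?_, ?_⟩
      · rintro (rfl : n = 0)
        simp at hn
        rw [← hn] at ha
        simp at ha
      · simp only at hn hm ⊢
        rw [← hn, ← hm, ← zpow_mul, ← zpow_mul, mul_comm]
    choose p hp0 hp using key
    refine Function.Injective.countable (f := p) ?_
    intro b b' hbb
    have e1 := hp b
    have e2 := hp b'
    rw [← hbb, ← e1] at e2
    have h0 := hp0 b
    generalize (p b).2 = n at *
    obtain ⟨c, ⟨s, rfl⟩, ⟨t, rfl⟩⟩ := h b b'
    obtain ⟨d, ⟨w, rfl⟩, had⟩ := h c a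
    have hi := inj d had
    simp only [← zpow_mul] at e2 ⊢
    have := hi e2
    have := mul_right_cancel₀ h0 this
    rw [this]
  · push Not at ht
    have fin : ∀ b : G, {b' | orderOf b' = orderOf b} ⊆ (Subgroup.zpowers b : Set G) := by
      intro b b' hb
      obtain ⟨c, hc, hc'⟩ := h b b'
      have hf : IsOfFinOrder c := by
        rw [← orderOf_pos_iff]; exact Nat.pos_of_ne_zero (ht c)
      rw [← hf.mem_powers_iff_mem_zpowers] at hc hc'
      obtain ⟨i, rfl⟩ := hc
      obtain ⟨j, rfl⟩ := hc'
      have hb' : orderOf (c ^ j) = orderOf (c ^ i) := hb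
      rw [hf.orderOf_pow, hf.orderOf_pow] at hb'
      have hN := ht c
      have hg : (orderOf c).gcd j = (orderOf c).gcd i := by
        have e1 := Nat.div_mul_cancel (Nat.gcd_dvd_left (orderOf c) j)
        have e2 := Nat.div_mul_cancel (Nat.gcd_dvd_left (orderOf c) i)
        rw [hb'] at e1
        refine Nat.eq_of_mul_eq_mul_left (Nat.pos_of_ne_zero ?_) (e1.trans e2.symm)
        intro h0
        rw [h0, zero_mul] at e2
        exact hN e2.symm
      obtain ⟨t, hj⟩ := Nat.gcd_dvd_right (orderOf c) j
      rw [hg] at hj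
      have hbz := Nat.gcd_eq_gcd_ab (orderOf c) i
      refine ⟨(orderOf c).gcdB i * t, ?_⟩
      have hz : (j : ℤ) = orderOf c * ((orderOf c).gcdA i * t) + i * ((orderOf c).gcdB i * t) := by
        have : (j : ℤ) = ((orderOf c).gcd i : ℤ) * t := by exact_mod_cast hj
        rw [this, hbz]; ring
      change (c ^ i) ^ ((orderOf c).gcdB i * (t : ℤ)) = c ^ j
      rw [← zpow_natCast c j, hz, zpow_add, zpow_mul c (orderOf c : ℤ), zpow_mul c (i : ℤ),
        zpow_natCast, zpow_natCast, pow_orderOf_eq_one, one_zpow, one_mul]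
    have : (Set.univ : Set G) = ⋃ n : ℕ, {b | orderOf b = n} := by ext; simp
    rw [← Set.countable_univ_iff, this]
    refine Set.countable_iUnion fun n => ?_
    by_cases hn : ∃ b : G, orderOf b = n
    · obtain ⟨b, rfl⟩ := hn
      refine Set.Countable.mono (fin b) ?_
      exact Set.countable_range (fun n : ℤ => b ^ n)
    · convert Set.countable_empty
      ext x
      simpa using fun hx => hn ⟨x, hx⟩

theorem lc_chain (G : Type*) [Group G] (c : ℕ → G) (k : ℕ → ℤ) (hk : ∀ n, k n ≠ 0)
    (hc : ∀ n, c (n + 1) ^ k n = c n) (hs : ∀ g, ∃ n, g ∈ Subgroup.zpowers (c n)) :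
    ∃ H : AddSubgroup ℚ, ∃ f : H →+ Additive G, Function.Surjective f := by
  obtain ⟨D, hD0, hD⟩ : ∃ D : ℕ → ℤ, (∀ n, D n ≠ 0) ∧ ∀ n, D (n + 1) = D n * k n :=
    ⟨fun n => ∏ i ∈ Finset.range n, k i, fun n => Finset.prod_ne_zero_iff.2 fun i _ => hk i,
      fun n => Finset.prod_range_succ _ _⟩
  have lift : ∀ (x : ℚ) (n : ℕ) (z : ℤ), (z : ℚ) = x * D n → ∀ j, ∃ w : ℤ, (w : ℚ) = x * D (n + j) ∧
      c (n + j) ^ w = c n ^ z := by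
    intro x n z hz j
    induction j with
    | zero => exact ⟨z, hz, rfl⟩
    | succ j ih =>
      obtain ⟨w, hw, he⟩ := ih
      refine ⟨k (n + j) * w, ?_, ?_⟩
      · rw [← add_assoc, hD]; push_cast; rw [hw]; ring
      · rw [← add_assoc, zpow_mul, hc, he]
  have lift' : ∀ (x : ℚ) (n : ℕ) (z : ℤ), (z : ℚ) = x * D n → ∀ N, n ≤ N → ∃ w : ℤ,
      (w : ℚ) = x * D N ∧ c N ^ w = c n ^ z := by
    intro x n z hz N hN
    obtain ⟨j, rfl⟩ := Nat.exists_eq_add_of_le hN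
    exact lift x n z hz j
  have wd : ∀ (x : ℚ) (n : ℕ) (z : ℤ) (n' : ℕ) (z' : ℤ), (z : ℚ) = x * D n → (z' : ℚ) = x * D n' →
      c n ^ z = c n' ^ z' := by
    intro x n z n' z' h h'
    obtain ⟨w, hw, e⟩ := lift' x n z h _ (le_max_left n n')
    obtain ⟨w', hw', e'⟩ := lift' x n' z' h' _ (le_max_right n n')
    have : w = w' := by exact_mod_cast hw.trans hw'.symm
    rw [← e, ← e', this]
  let H : AddSubgroup ℚ :=
    { carrier := {x | ∃ (n : ℕ) (z : ℤ), (z : ℚ) = x * D n}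
      zero_mem' := ⟨0, 0, by simp⟩
      add_mem' := by
        rintro x y ⟨n, z, h⟩ ⟨n', z', h'⟩
        obtain ⟨w, hw, -⟩ := lift' x n z h _ (le_max_left n n')
        obtain ⟨w', hw', -⟩ := lift' y n' z' h' _ (le_max_right n n')
        exact ⟨max n n', w + w', by push_cast; rw [hw, hw']; ring⟩
      neg_mem' := by
        rintro x ⟨n, z, h⟩
        exact ⟨n, -z, by push_cast; rw [h]; ring⟩ }
  have hH : ∀ x : H, ∃ (n : ℕ) (z : ℤ), (z : ℚ) = x * D n := fun x => x.2
  choose n z hz using hH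
  refine ⟨H, AddMonoidHom.mk' (fun x => Additive.ofMul (c (n x) ^ z x)) ?_, ?_⟩
  · intro x y
    rw [← ofMul_mul]
    congr 1
    obtain ⟨w, hw, e⟩ := lift' x _ _ (hz x) _ (le_max_left (n x) (n y))
    obtain ⟨w', hw', e'⟩ := lift' y _ _ (hz y) _ (le_max_right (n x) (n y))
    rw [← e, ← e', ← zpow_add]
    refine wd _ _ _ _ _ (hz _) ?_
    push_cast
    rw [hw, hw']; ring
  · intro g
    obtain ⟨N, m, hm⟩ := hs g.toMul
    have hDN : (D N : ℚ) ≠ 0 := by exact_mod_cast hD0 N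
    have hx : (m : ℚ) = (m / D N : ℚ) * D N := by field_simp
    refine ⟨⟨m / D N, N, m, hx⟩, ?_⟩
    change Additive.ofMul _ = g
    rw [wd _ _ _ _ _ (hz _) hx]
    simp only at hm
    rw [hm]
    rfl

theorem lc_exists_hom (G : Type*) [Group G]
    (h : ∀ a b : G, ∃ c : G, a ∈ Subgroup.zpowers c ∧ b ∈ Subgroup.zpowers c) :
    ∃ H : AddSubgroup ℚ, ∃ f : H →+ Additive G, Function.Surjective f := by
  rcases subsingleton_or_nontrivial G with hG | hG
  · exact ⟨⊥, 0, fun x => ⟨0, Subsingleton.elim (α := G) _ _⟩⟩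
  have := lc_countable G h
  obtain ⟨g, hg⟩ := exists_surjective_nat G
  obtain ⟨a, ha⟩ := exists_ne (1 : G)
  choose C hC1 hC2 using h
  let c : ℕ → G := fun n => Nat.rec a (fun n x => C x (g n)) n
  have hcs : ∀ n, c (n + 1) = C (c n) (g n) := fun n => rfl
  have hk : ∀ n, ∃ k : ℤ, c (n + 1) ^ k = c n := fun n => hC1 (c n) (g n)
  choose k hk using hk
  have hne : ∀ n, c n ≠ 1 := by
    intro n
    induction n with
    | zero => exact ha
    | succ n ih =>
      intro e
      apply ih
      rw [← hk n, e, one_zpow]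
  refine lc_chain G c k ?_ hk ?_
  · intro n e
    apply hne n
    rw [← hk n, e, zpow_zero]
  · intro x
    obtain ⟨n, rfl⟩ := hg x
    exact ⟨n + 1, hC2 _ _⟩

/-- A group is locally cyclic if and only if it is isomorphic to a section
(a quotient of a subgroup) of the additive group of rational numbers. -/
theorem locallyCyclic_iff_section_of_rat (G : Type*) [Group G] :
    (∀ a b : G, ∃ c : G, a ∈ Subgroup.zpowers c ∧ b ∈ Subgroup.zpowers c) ↔
      ∃ H : AddSubgroup ℚ, ∃ N : AddSubgroup H,
        Nonempty (G ≃* Multiplicative (H ⧸ N)) := by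
  constructor
  · intro h
    obtain ⟨H, f, hf⟩ := lc_exists_hom G h
    let e := QuotientAddGroup.quotientKerEquivOfSurjective f hf
    exact ⟨H, f.ker, ⟨(AddEquiv.toMultiplicativeLeft e).symm⟩⟩
  · rintro ⟨H, N, ⟨e⟩⟩ a b
    obtain ⟨c, ⟨m, hm⟩, n, hn⟩ := lc_section H N (e a).toAdd (e b).toAdd
    refine ⟨e.symm (Multiplicative.ofAdd c), ⟨m, ?_⟩, n, ?_⟩
    · apply e.injective
      simp only [map_zpow, MulEquiv.apply_symm_apply]
      rw [← ofAdd_zsmul, hm]; rfl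
    · apply e.injective
      simp only [map_zpow, MulEquiv.apply_symm_apply]
      rw [← ofAdd_zsmul, hn]; rfl
end

section
/- A finite permutation group G has orbit partition set π(G) totally ordered by refinement if and only if G is cyclic of prime-power order and acts with all its orbits regular (equivalently, for finite transitive G: π(G) is a chain iff G is cyclic of prime-power order acting regularly). -/
/-- The orbit partition of a permutation `g`, as a setoid on `Ω`. -/
def piPart {Ω : Type*} (g : Equiv.Perm Ω) : Setoid Ω :=
  MulAction.orbitRel (Subgroup.zpowers g) Ω

/-- The set of orbit partitions of elements of a permutation group `G`. -/
def piSet {Ω : Type*} (G : Subgroup (Equiv.Perm Ω)) : Set (Setoid Ω) :=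
  {P | ∃ g ∈ G, piPart g = P}

/-- `G` is join-coherent if its set of orbit partitions is closed under joins. -/
def JoinCoherent {Ω : Type*} (G : Subgroup (Equiv.Perm Ω)) : Prop :=
  ∀ P ∈ piSet G, ∀ Q ∈ piSet G, P ⊔ Q ∈ piSet G

/-- `G` is meet-coherent if its set of orbit partitions is closed under meets. -/
def MeetCoherent {Ω : Type*} (G : Subgroup (Equiv.Perm Ω)) : Prop :=
  ∀ P ∈ piSet G, ∀ Q ∈ piSet G, P ⊓ Q ∈ piSet G

lemma piPart_iff {Ω : Type*} (g : Equiv.Perm Ω) (x y : Ω) :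
    (piPart g) x y ↔ ∃ n : ℤ, (g ^ n) y = x := by
  unfold piPart
  rw [MulAction.orbitRel_apply, MulAction.mem_orbit_iff]
  constructor
  · rintro ⟨⟨_, n, rfl⟩, h⟩
    exact ⟨n, h⟩
  · rintro ⟨n, h⟩
    exact ⟨⟨g ^ n, n, rfl⟩, h⟩

lemma piPart_mono {Ω : Type*} {g h : Equiv.Perm Ω} (hg : g ∈ Subgroup.zpowers h) :
    piPart g ≤ piPart h := by
  obtain ⟨m, rfl⟩ := hg
  intro x y hxy
  obtain ⟨n, hn⟩ := (piPart_iff _ x y).1 hxy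
  refine (piPart_iff _ x y).2 ⟨m * n, ?_⟩
  rw [zpow_mul]
  exact hn

lemma piPart_exists {Ω : Type*} {g h : Equiv.Perm Ω} (hg : piPart g ≤ piPart h) (x : Ω) :
    ∃ n : ℤ, (h ^ n) x = g x :=
  (piPart_iff _ _ _).1 (hg ((piPart_iff g (g x) x).2 ⟨1, by simp⟩))

lemma chain_total {Ω : Type*} {G : Subgroup (Equiv.Perm Ω)}
    (hc : IsChain (· ≤ ·) (piSet G)) (a b : G) :
    piPart a.1 ≤ piPart b.1 ∨ piPart b.1 ≤ piPart a.1 :=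
  hc.total ⟨a.1, a.2, rfl⟩ ⟨b.1, b.2, rfl⟩

lemma fix_of_le {Ω : Type*} {g h : Equiv.Perm Ω} (hg : piPart g ≤ piPart h) {x : Ω}
    (hx : h x = x) : g x = x := by
  obtain ⟨n, hn⟩ := piPart_exists hg x
  rw [← hn]
  exact Equiv.Perm.zpow_apply_eq_self_of_apply_eq_self hx n

/-- In a chain, some point has trivial stabilizer. -/
lemma exists_regular_point {Ω : Type*} [Finite Ω] [Nonempty Ω] {G : Subgroup (Equiv.Perm Ω)}
    (hc : IsChain (· ≤ ·) (piSet G)) : ∃ x : Ω, ∀ g : G, g.1 x = x → g = 1 := by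
  obtain ⟨x, hx⟩ := Finite.exists_min (fun y : Ω => Nat.card (MulAction.stabilizer G y))
  refine ⟨x, fun g hg => ?_⟩
  ext y
  by_contra hy
  have hle : MulAction.stabilizer G y ≤ MulAction.stabilizer G x := by
    intro b hb
    have hb' : b.1 y = y := hb
    change b.1 x = x
    rcases chain_total hc g b with h | h
    · exact absurd (fix_of_le h hb') hy
    · exact fix_of_le h hg
  have he := Subgroup.eq_of_le_of_card_ge hle (hx y)
  have hm : g ∈ MulAction.stabilizer G x := hg
  rw [← he] at hm
  exact hy hm

lemma zpowers_total {Ω : Type*} [Finite Ω] {G : Subgroup (Equiv.Perm Ω)}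
    (hc : IsChain (· ≤ ·) (piSet G)) (a b : G) :
    a ∈ Subgroup.zpowers b ∨ b ∈ Subgroup.zpowers a := by
  rcases isEmpty_or_nonempty Ω with hΩ | hΩ
  · left
    have : a = 1 := by
      ext y
      exact hΩ.elim y
    rw [this]
    exact one_mem _
  obtain ⟨x, hx⟩ := exists_regular_point hc
  have key : ∀ a b : G, piPart a.1 ≤ piPart b.1 → a ∈ Subgroup.zpowers b := by
    intro a b h
    obtain ⟨n, hn⟩ := piPart_exists h x
    refine ⟨n, ?_⟩
    have := hx (a⁻¹ * b ^ n) (by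
      simp only [Subgroup.coe_mul, Subgroup.coe_inv, Subgroup.coe_zpow, Equiv.Perm.mul_apply, hn]
      simp)
    exact (inv_mul_eq_one.1 this).symm
  exact (chain_total hc a b).imp (key a b) (key b a)

/-- For a permutation group `G` of finite degree, the set of orbit partitions of elements
of `G` is totally ordered by refinement if and only if `G` is cyclic of prime-power order
and the permutation group induced by `G` on each of its orbits is regular. -/
theorem finite_chain_iff_cyclic_primePow {Ω : Type*} [Finite Ω]
    (G : Subgroup (Equiv.Perm Ω)) :
    IsChain (· ≤ ·) (piSet G) ↔
      (IsCyclic ↥G ∧ (∃ p k : ℕ, p.Prime ∧ Nat.card ↥G = p ^ k) ∧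
        ∀ g ∈ G, ∀ x y : Ω, (∃ h ∈ G, h x = y) → g x = x → g y = y) := by
  constructor
  · intro hc
    have hcyc : IsCyclic G := by
      obtain ⟨g, hg⟩ := Finite.exists_max (fun g : G => orderOf g)
      refine ⟨g, fun h => ?_⟩
      rcases zpowers_total hc h g with h1 | h1
      · exact h1
      · have hle : Subgroup.zpowers g ≤ Subgroup.zpowers h := Subgroup.zpowers_le.2 h1
        have he := Subgroup.eq_of_le_of_card_ge hle (by
          rw [Nat.card_zpowers, Nat.card_zpowers]
          exact hg h)
        exact he.ge (Subgroup.mem_zpowers h)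
    refine ⟨hcyc, ?_, ?_⟩
    · by_cases h1 : Nat.card G = 1
      · exact ⟨2, 0, Nat.prime_two, by simpa using h1⟩
      · obtain ⟨p, hp, hpd⟩ := Nat.exists_prime_and_dvd h1
        refine ⟨p, (Nat.card G).primeFactorsList.length, hp, ?_⟩
        refine Nat.eq_prime_pow_of_unique_prime_dvd Nat.card_pos.ne' ?_
        intro q hq hqd
        haveI := Fact.mk hp
        haveI := Fact.mk hq
        obtain ⟨a, ha⟩ := exists_prime_orderOf_dvd_card' p hpd
        obtain ⟨b, hb⟩ := exists_prime_orderOf_dvd_card' q hqd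
        rcases zpowers_total hc a b with h | h
        · have := orderOf_dvd_of_mem_zpowers h
          rw [ha, hb] at this
          exact ((Nat.prime_dvd_prime_iff_eq hp hq).1 this).symm
        · have := orderOf_dvd_of_mem_zpowers h
          rw [ha, hb] at this
          exact (Nat.prime_dvd_prime_iff_eq hq hp).1 this
    · rintro g hg x y ⟨h, hh, rfl⟩ hx
      have hcomm : (⟨g, hg⟩ : G) * ⟨h, hh⟩ = ⟨h, hh⟩ * ⟨g, hg⟩ := by
        letI := hcyc.commGroup
        exact mul_comm _ _
      have h2 : g * h = h * g := congrArg Subtype.val hcomm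
      have h3 := congrArg (fun f : Equiv.Perm Ω => f x) h2
      simp only [Equiv.Perm.mul_apply, hx] at h3
      exact h3
  · rintro ⟨hcyc, ⟨p, k, hp, hk⟩, -⟩
    rintro _ ⟨a, ha, rfl⟩ _ ⟨b, hb, rfl⟩ -
    have key : ∀ a b : G, orderOf a ∣ orderOf b → piPart a.1 ≤ piPart b.1 := by
      intro a b hab
      have hm : a ∈ Subgroup.zpowers b := by
        classical
        have := Fintype.ofFinite G
        have hle := IsCyclic.card_pow_eq_one_le (α := G) (orderOf_pos b)
        have hsub : (Finset.univ.filter fun x : G => x ∈ Subgroup.zpowers b) ⊆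
            Finset.univ.filter fun x : G => x ^ orderOf b = 1 := by
          intro x hx
          simp only [Finset.mem_filter, Finset.mem_univ, true_and] at hx ⊢
          exact orderOf_dvd_iff_pow_eq_one.1 (orderOf_dvd_of_mem_zpowers hx)
        have hcard : (Finset.univ.filter fun x : G => x ∈ Subgroup.zpowers b).card
            = orderOf b := by
          rw [← Nat.card_zpowers, Nat.card_eq_fintype_card]
          exact (Fintype.card_subtype _).symm
        have he := Finset.eq_of_subset_of_card_le hsub (by rw [hcard]; exact hle)
        have ham : a ∈ Finset.univ.filter fun x : G => x ^ orderOf b = 1 := by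
          simp only [Finset.mem_filter, Finset.mem_univ, true_and]
          exact orderOf_dvd_iff_pow_eq_one.1 hab
        rw [← he] at ham
        simpa using ham
      obtain ⟨n, hn⟩ := hm
      exact piPart_mono ⟨n, by rw [← hn]; simp⟩
    obtain ⟨i, -, hi⟩ := (Nat.dvd_prime_pow hp).1 (hk ▸ orderOf_dvd_natCard (⟨a, ha⟩ : G))
    obtain ⟨j, -, hj⟩ := (Nat.dvd_prime_pow hp).1 (hk ▸ orderOf_dvd_natCard (⟨b, hb⟩ : G))
    rcases le_total i j with h | h
    · exact Or.inl (key ⟨a, ha⟩ ⟨b, hb⟩ (by rw [hi, hj]; exact pow_dvd_pow p h))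
    · exact Or.inr (key ⟨b, hb⟩ ⟨a, ha⟩ (by rw [hi, hj]; exact pow_dvd_pow p h))
end
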